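/- Suppose α satisfies either: (i) 0 ≤ α with α⁴ − 4(1−√2)α³ − 12(3−√2)α² − 12(6−√2)α − 48 < 0 and 6α⁵ + (23+3√2)α⁴ + (13+19√2)α³ − (77−38√2)α² − (157−24√2)α − 96 < 0, or (ii) −1 < α < 0 with −(2+7√3)α⁴ + 2(15+√2−11√3+√6)α³ + 2(57+3√2−10√3+3√6)α² + 6(20+√2+√6)α + 24 > 0. Then there exists c > 0 such that for every u ∈ C_0^∞(ℝ³;ℝ³) and every y ∈ ℝ³, ∫_{ℝ³}(Lu(x))·(Φ(x−y)u(x)) dx ≥ (1/2)|u(y)|² + c ∫_{ℝ³}|Du(x)|² |x−y|^{−1} dx, where Du is the Jacobian matrix of u. -/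

import Mathlib

/-!
Put `a = α / (α + 2)` and translate `y` to the origin. Pulling complete derivatives out of
`Lu · Φ u` leaves a quadratic form in `Du` plus derivatives of `uᵢ uⱼ` and `(div u) uⱼ` tested
against `Φ`. The entries of `Φ` are combinations of `|x|⁻¹` and the Hessian of `|x|`, and
`Δ|x| = 2|x|⁻¹`, `Δ|x|⁻¹ = -4πδ` as distributions (let `ε → 0` in `√(|x|² + ε²)`), so these
derivatives contribute `½|u(0)|²`, multiples of `∫ |x|⁻¹ ∂ⱼ((div u) uⱼ)` which cancel by the choice
of `a`, and the null Lagrangian `(div u)² - tr (Du)²` that comes from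
`∑ ∂ᵢ∂ⱼ(uᵢuⱼ) = 2 ∑ ∂ⱼ((div u) uⱼ) - ((div u)² - tr (Du)²)`.

Hence the energy is `½|u(0)|² + c_α ∫ Q |x|⁻¹` with, for `w = x / |x|`,
`Q = |Du|² + a ((α + 1)(div u)² + α (div u)(w · Du w) + |wᵀDu|² + tr (Du)²)`.
In an orthonormal basis starting with `w`, `Q` splits into binary forms, all of them positive
definite as soon as `α(3α + 2) < 2√2 (α + 1)²`. This holds on `[-1/4, 2]`, to which the polynomial
conditions confine `α`.
-/

open MeasureTheory Metric Real Filter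

noncomputable section

/-- `ℝ³` as Euclidean space. -/
abbrev E3 : Type := EuclideanSpace ℝ (Fin 3)

/-- Partial derivative `∂ᵢ f` on `ℝ³`. -/
def pd (i : Fin 3) (f : E3 → ℝ) (x : E3) : ℝ :=
  fderiv ℝ f x (EuclideanSpace.single i 1)

/-- Laplacian on `ℝ³`. -/
def lap (f : E3 → ℝ) (x : E3) : ℝ := ∑ i, pd i (pd i f) x

/-- Divergence of a vector field on `ℝ³`. -/
def divg (u : E3 → Fin 3 → ℝ) (x : E3) : ℝ := ∑ k, pd k (fun y => u y k) x

/-- The 3D Lamé operator `(Lu)ᵢ = -Δuᵢ - α ∂ᵢ (div u)`. -/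
def lame (α : ℝ) (u : E3 → Fin 3 → ℝ) (x : E3) (i : Fin 3) : ℝ :=
  - lap (fun y => u y i) x - α * pd i (divg u) x

/-- The constant `c_α = (α+2)/(8π(α+1))`. -/
def cA (α : ℝ) : ℝ := (α + 2) / (8 * Real.pi * (α + 1))

/-- The fundamental matrix `Φ` of the 3D Lamé system:
`Φ_ij(x) = c_α |x|⁻¹ (δ_ij + (α/(α+2)) xᵢxⱼ/|x|²)`. -/
def Phi (α : ℝ) (x : E3) (i j : Fin 3) : ℝ :=
  cA α * ‖x‖⁻¹ * ((if i = j then (1 : ℝ) else 0) + (α / (α + 2)) * (x i * x j) / ‖x‖ ^ 2)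

/-- `u ∈ C₀^∞(U; ℝ³)`: smooth, compactly supported, with support inside `U`. -/
def IsTestOn (U : Set E3) (u : E3 → Fin 3 → ℝ) : Prop :=
  ContDiff ℝ (⊤ : ℕ∞) u ∧ HasCompactSupport u ∧ tsupport u ⊆ U

/-- `∫_{ℝ³} (Lu)·(Φ(·-y) u) dx`. -/
def lameEnergy (α : ℝ) (u : E3 → Fin 3 → ℝ) (y : E3) : ℝ :=
  ∫ x : E3, ∑ i, ∑ j, lame α u x i * Phi α (x - y) i j * u x j

open scoped ContDiff Topology

/-! ### Partial derivatives -/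

section Calculus

variable {f g : E3 → ℝ}

lemma contDiff_pd {m n : WithTop ℕ∞} (hf : ContDiff ℝ n f) (hmn : m + 1 ≤ n) (i : Fin 3) :
    ContDiff ℝ m (pd i f) :=
  (hf.fderiv_right hmn).clm_apply contDiff_const

lemma hasCompactSupport_pd (hf : HasCompactSupport f) (i : Fin 3) : HasCompactSupport (pd i f) :=
  hf.fderiv_apply ℝ _

lemma continuous_pd_pd (hf : ContDiff ℝ 2 f) (i j : Fin 3) : Continuous (pd i (pd j f)) :=
  (contDiff_pd (m := 0) (contDiff_pd (m := 1) hf (by norm_num) j) (by norm_num) i).continuous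

lemma continuous_lap (hf : ContDiff ℝ 2 f) : Continuous (lap f) :=
  continuous_finsetSum _ fun i _ => continuous_pd_pd hf i i

lemma hasCompactSupport_lap (hf : HasCompactSupport f) : HasCompactSupport (lap f) := by
  have hsum : HasCompactSupport (∑ i, pd i (pd i f)) :=
    Finset.sum_induction _ HasCompactSupport (fun _ _ hf hg => hf.add hg) HasCompactSupport.zero
    fun i _ => hasCompactSupport_pd (hasCompactSupport_pd hf i) i
  rwa [Finset.sum_fn] at hsum

lemma pd_coord (i j : Fin 3) : pd i (fun x : E3 => x j) = fun _ => if i = j then 1 else 0 := by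
  funext x
  have hproj : fderiv ℝ (fun x : E3 => x j) x = EuclideanSpace.proj j :=
    (EuclideanSpace.proj j : E3 →L[ℝ] ℝ).fderiv
  simp [pd, hproj, eq_comm]

lemma pd_add (hf : Differentiable ℝ f) (hg : Differentiable ℝ g) (i : Fin 3) :
    pd i (fun x => f x + g x) = fun x => pd i f x + pd i g x := by
  funext x
  simp [pd, fderiv_fun_add (hf x) (hg x)]

lemma pd_sum {ι : Type*} {s : Finset ι} {F : ι → E3 → ℝ}
    (hF : ∀ k ∈ s, Differentiable ℝ (F k)) (i : Fin 3) :
    pd i (fun x => ∑ k ∈ s, F k x) = fun x => ∑ k ∈ s, pd i (F k) x := by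
  funext x
  simp [pd, fderiv_fun_sum fun k hk => hF k hk x]

lemma pd_mul (hf : Differentiable ℝ f) (hg : Differentiable ℝ g) (i : Fin 3) :
    pd i (fun x => f x * g x) = fun x => pd i f x * g x + f x * pd i g x := by
  funext x
  simp only [pd, fderiv_fun_mul (hf x) (hg x), _root_.add_apply, _root_.smul_apply, smul_eq_mul]
  ring

lemma pd_neg (f : E3 → ℝ) (i : Fin 3) : pd i (fun x => -f x) = fun x => -pd i f x := by
  funext x
  simp [pd]

lemma pd_inv (hf : Differentiable ℝ f) (h0 : ∀ x, f x ≠ 0) (i : Fin 3) :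
    pd i (fun x => (f x)⁻¹) = fun x => -(pd i f x * (f x)⁻¹ ^ 2) := by
  funext x
  have hinv := ((hasDerivAt_inv (h0 x)).comp_hasFDerivAt x (hf x).hasFDerivAt).fderiv
  rw [pd, show (fun x => (f x)⁻¹) = Inv.inv ∘ f from rfl, hinv]
  simp [pd, mul_comm]

lemma pd_pow (hf : Differentiable ℝ f) (n : ℕ) (i : Fin 3) :
    pd i (fun x => f x ^ n) = fun x => n * f x ^ (n - 1) * pd i f x := by
  funext x
  simp [pd, fderiv_fun_pow n (hf x)]

lemma pd_comp_add_right (f : E3 → ℝ) (y : E3) (i : Fin 3) :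
    pd i (fun x => f (x + y)) = fun x => pd i f (x + y) := by
  funext x
  simp only [pd, fderiv_comp_add_right]

lemma lap_comp_add_right (f : E3 → ℝ) (y : E3) :
    lap (fun x => f (x + y)) = fun x => lap f (x + y) := by
  funext x
  simp only [lap, pd_comp_add_right]

lemma pd_comm (hf : ContDiff ℝ 2 f) (i j : Fin 3) : pd i (pd j f) = pd j (pd i f) := by
  funext x
  have hdiff : DifferentiableAt ℝ (fderiv ℝ f) x :=
    (hf.fderiv_right (m := 1) (by norm_num)).differentiable one_ne_zero x
  have hsymm : IsSymmSndFDerivAt ℝ f x := hf.contDiffAt.isSymmSndFDerivAt (by simp)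
  have hsnd (v w : E3) :
      fderiv ℝ (fun y => fderiv ℝ f y v) x w = fderiv ℝ (fderiv ℝ f) x w v := by
    simp [fderiv_clm_apply hdiff (differentiableAt_const v)]
  exact (hsnd _ _).trans ((hsymm _ _).trans (hsnd _ _).symm)

lemma pd_lap (hf : ContDiff ℝ 3 f) (i : Fin 3) : pd i (lap f) = lap (pd i f) := by
  have hf₂ (k : Fin 3) : ContDiff ℝ 2 (pd k f) := contDiff_pd hf (by norm_num) k
  have hf₁ (k : Fin 3) : Differentiable ℝ (pd k (pd k f)) :=
    (contDiff_pd (m := 1) (hf₂ k) (by norm_num) k).differentiable one_ne_zero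
  have hcomm (k : Fin 3) : pd i (pd k (pd k f)) = pd k (pd k (pd i f)) := by
    rw [pd_comm (hf₂ k) i k, pd_comm (hf.of_le (by norm_num)) i k]
  funext x
  change pd i (fun x => ∑ k, pd k (pd k f) x) x = ∑ k, pd k (pd k (pd i f)) x
  simp only [pd_sum fun k _ => hf₁ k, hcomm]

lemma pd_pd_mul (hf : ContDiff ℝ 2 f) (hg : ContDiff ℝ 2 g) (i j : Fin 3) :
    pd i (pd j (fun x => f x * g x)) = fun x =>
      pd i (pd j f) x * g x + pd j f x * pd i g x
        + (pd i f x * pd j g x + f x * pd i (pd j g) x) := by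
  have hf₀ := hf.differentiable two_ne_zero
  have hg₀ := hg.differentiable two_ne_zero
  have hf₁ := (contDiff_pd (m := 1) hf (by norm_num) j).differentiable one_ne_zero
  have hg₁ := (contDiff_pd (m := 1) hg (by norm_num) j).differentiable one_ne_zero
  rw [pd_mul hf₀ hg₀, pd_add (hf₁.fun_mul hg₀) (hf₀.fun_mul hg₁), pd_mul hf₁ hg₀, pd_mul hf₀ hg₁]

lemma lap_mul (hf : ContDiff ℝ 2 f) (hg : ContDiff ℝ 2 g) :
    lap (fun x => f x * g x) = fun x =>
      lap f x * g x + 2 * (∑ k, pd k f x * pd k g x) + f x * lap g x := by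
  funext x
  simp only [lap, pd_pd_mul hf hg, Finset.sum_add_distrib, Finset.sum_mul, Finset.mul_sum]
  simp only [two_mul, Finset.sum_add_distrib]
  ring

lemma integral_pd_mul (hf : ContDiff ℝ 1 f) (hsupp : HasCompactSupport f) (hg : ContDiff ℝ 1 g)
    (i : Fin 3) : ∫ x, pd i f x * g x = -∫ x, f x * pd i g x := by
  have hpd {h : E3 → ℝ} (hh : ContDiff ℝ 1 h) : Continuous (pd i h) :=
    (contDiff_pd (m := 0) hh (by norm_num) i).continuous
  have hparts := integral_mul_fderiv_eq_neg_fderiv_mul_of_integrable (μ := (volume : Measure E3))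
    (f := f) (g := g) (v := EuclideanSpace.single i 1)
    (((hpd hf).mul hg.continuous).integrable_of_hasCompactSupport
      (hasCompactSupport_pd hsupp i).mul_right)
    ((hf.continuous.mul (hpd hg)).integrable_of_hasCompactSupport hsupp.mul_right)
    ((hf.continuous.mul hg.continuous).integrable_of_hasCompactSupport hsupp.mul_right)
    (fun x _ => hf.differentiable one_ne_zero x) (fun x _ => hg.differentiable one_ne_zero x)
  exact neg_eq_iff_eq_neg.mp hparts.symm

lemma integral_pd_pd_mul (hf : ContDiff ℝ 2 f) (hsupp : HasCompactSupport f) (hg : ContDiff ℝ 2 g)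
    (i j : Fin 3) : ∫ x, pd i (pd j f) x * g x = ∫ x, f x * pd i (pd j g) x := by
  have h12 : (1 : WithTop ℕ∞) ≤ 2 := by norm_num
  rw [integral_pd_mul (contDiff_pd hf (by norm_num) j) (hasCompactSupport_pd hsupp j)
      (hg.of_le h12), integral_pd_mul (hf.of_le h12) hsupp (contDiff_pd hg (by norm_num) i),
    neg_neg, pd_comm hg]

lemma integral_lap_mul (hf : ContDiff ℝ 2 f) (hsupp : HasCompactSupport f) (hg : ContDiff ℝ 2 g) :
    ∫ x, lap f x * g x = ∫ x, f x * lap g x := by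
  simp only [lap, Finset.sum_mul, Finset.mul_sum]
  rw [integral_finsetSum _ fun i _ => ?_, integral_finsetSum _ fun i _ => ?_]
  · simp only [integral_pd_pd_mul hf hsupp hg]
  · exact (hf.continuous.mul (continuous_pd_pd hg i i)).integrable_of_hasCompactSupport
      hsupp.mul_right
  · exact ((continuous_pd_pd hf i i).mul hg.continuous).integrable_of_hasCompactSupport
      (hasCompactSupport_pd (hasCompactSupport_pd hsupp i) i).mul_right

end Calculus

/-- A test function on `ℝ³`: smooth and compactly supported. -/
def IsTest (f : E3 → ℝ) : Prop := ContDiff ℝ ∞ f ∧ HasCompactSupport f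

section TestFunctions

variable {f g : E3 → ℝ}

lemma IsTest.contDiff (hf : IsTest f) (n : ℕ) : ContDiff ℝ n f := contDiff_infty.mp hf.1 n

lemma IsTest.continuous (hf : IsTest f) : Continuous f := hf.1.continuous

lemma IsTest.differentiable (hf : IsTest f) : Differentiable ℝ f := hf.1.differentiable (by simp)

lemma IsTest.pd (hf : IsTest f) (i : Fin 3) : IsTest (pd i f) :=
  ⟨contDiff_pd hf.1 (by simp) i, hasCompactSupport_pd hf.2 i⟩

lemma IsTest.mul (hf : IsTest f) (hg : IsTest g) : IsTest (fun x => f x * g x) :=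
  ⟨hf.1.mul hg.1, hf.2.mul_right⟩

lemma IsTest.const_mul (c : ℝ) (hf : IsTest f) : IsTest (fun x => c * f x) :=
  ⟨contDiff_const.mul hf.1, hf.2.mul_left⟩

lemma IsTest.add (hf : IsTest f) (hg : IsTest g) : IsTest (fun x => f x + g x) :=
  ⟨hf.1.add hg.1, hf.2.add hg.2⟩

lemma IsTest.sum {ι : Type*} {s : Finset ι} {F : ι → E3 → ℝ} (hF : ∀ i ∈ s, IsTest (F i)) :
    IsTest (fun x => ∑ i ∈ s, F i x) := by
  simpa only [Finset.sum_fn] using Finset.sum_induction F IsTest (fun _ _ hf hg => hf.add hg)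
    ⟨contDiff_const, HasCompactSupport.zero⟩ hF

lemma IsTest.lap (hf : IsTest f) : IsTest (lap f) :=
  IsTest.sum fun i _ => (hf.pd i).pd i

lemma IsTest.integrable_mul {K : E3 → ℝ} (hf : IsTest f) (hK : LocallyIntegrable K) :
    Integrable (fun x => f x * K x) :=
  hK.integrable_smul_left_of_hasCompactSupport hf.continuous hf.2

end TestFunctions

/-! ### The regularized distance -/

/-- The smooth approximation `√(|x|² + ε²)` of `|x|`. -/
def rho (ε : ℝ) (x : E3) : ℝ := √(‖x‖ ^ 2 + ε ^ 2)

section RegularizedDistance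

variable {ε : ℝ}

lemma rho_sq (ε : ℝ) (x : E3) : rho ε x ^ 2 = ‖x‖ ^ 2 + ε ^ 2 := Real.sq_sqrt (by positivity)

lemma rho_pos (hε : ε ≠ 0) (x : E3) : 0 < rho ε x := Real.sqrt_pos.mpr (by positivity)

lemma rho_nonneg (ε : ℝ) (x : E3) : 0 ≤ rho ε x := Real.sqrt_nonneg _

lemma norm_le_rho (ε : ℝ) (x : E3) : ‖x‖ ≤ rho ε x :=
  Real.le_sqrt_of_sq_le (le_add_of_nonneg_right (sq_nonneg ε))

lemma rho_le_norm_add_abs (ε : ℝ) (x : E3) : rho ε x ≤ ‖x‖ + |ε| := by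
  refine Real.sqrt_le_iff.mpr ⟨by positivity, ?_⟩
  rw [add_sq, sq_abs]
  nlinarith [mul_nonneg (norm_nonneg x) (abs_nonneg ε)]

lemma rho_smul (ε : ℝ) (x : E3) : rho ε (ε • x) = |ε| * rho 1 x := by
  rw [rho, rho, norm_smul, Real.norm_eq_abs, mul_pow, sq_abs, one_pow, ← mul_add_one,
    Real.sqrt_mul (sq_nonneg ε), Real.sqrt_sq_eq_abs]

lemma tendsto_rho (x : E3) : Tendsto (fun ε => rho ε x) (𝓝[≠] 0) (𝓝 ‖x‖) := by
  have hcont : Continuous fun ε => rho ε x := by unfold rho; fun_prop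
  simpa [rho] using (hcont.tendsto 0).mono_left nhdsWithin_le_nhds

lemma contDiff_rho {n : WithTop ℕ∞} (hε : ε ≠ 0) : ContDiff ℝ n (rho ε) :=
  ((contDiff_norm_sq ℝ).add contDiff_const).sqrt fun x => by positivity

lemma contDiff_rho_inv {n : WithTop ℕ∞} (hε : ε ≠ 0) : ContDiff ℝ n (fun x => (rho ε x)⁻¹) :=
  (contDiff_rho hε).inv fun x => (rho_pos hε x).ne'

lemma pd_rho (hε : ε ≠ 0) (i : Fin 3) : pd i (rho ε) = fun x => x i * (rho ε x)⁻¹ := by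
  funext x
  have hderiv : HasFDerivAt (rho ε) _ x :=
    ((hasStrictFDerivAt_norm_sq x).hasFDerivAt.add_const (ε ^ 2)).sqrt (by positivity)
  have := rho_pos hε x
  rw [pd, hderiv.fderiv]
  simp only [rho, one_div, mul_inv_rev, _root_.smul_apply, coe_innerSL_apply,
    EuclideanSpace.inner_single_right, ringHom_apply, one_mul, nsmul_eq_mul, Nat.cast_ofNat,
    smul_eq_mul]
  field_simp

lemma pd_rho_inv (hε : ε ≠ 0) (i : Fin 3) :
    pd i (fun x => (rho ε x)⁻¹) = fun x => -(x i * (rho ε x)⁻¹ ^ 3) := by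
  rw [pd_inv ((contDiff_rho hε).differentiable one_ne_zero) fun x => (rho_pos hε x).ne',
    pd_rho hε]
  funext x
  ring

lemma pd_pd_rho (hε : ε ≠ 0) (i j : Fin 3) :
    pd i (pd j (rho ε)) =
      fun x => (if i = j then 1 else 0) * (rho ε x)⁻¹ - x i * x j * (rho ε x)⁻¹ ^ 3 := by
  rw [pd_rho hε, pd_mul (by fun_prop) ((contDiff_rho_inv hε).differentiable one_ne_zero),
    pd_coord, pd_rho_inv hε]
  funext x
  ring

lemma lap_rho_inv (hε : ε ≠ 0) :
    lap (fun x => (rho ε x)⁻¹) = fun x => -(3 * ε ^ 2 * (rho ε x)⁻¹ ^ 5) := by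
  have hdiff := (contDiff_rho_inv hε).differentiable one_ne_zero
  have hpd (i : Fin 3) (x : E3) : pd i (pd i (fun x => (rho ε x)⁻¹)) x =
      -(rho ε x)⁻¹ ^ 3 + 3 * (rho ε x)⁻¹ ^ 5 * x i ^ 2 := by
    rw [pd_rho_inv hε, pd_neg, pd_mul (by fun_prop) (hdiff.fun_pow 3), pd_coord, pd_pow hdiff,
      pd_rho_inv hε]
    simp only [if_true]
    push_cast
    ring
  funext x
  have hρ := (rho_pos hε x).ne'
  calc lap (fun x => (rho ε x)⁻¹) x
      = -3 * (rho ε x)⁻¹ ^ 3 + 3 * (rho ε x)⁻¹ ^ 5 * ‖x‖ ^ 2 := by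
        simp only [lap, hpd, Finset.sum_add_distrib, ← Finset.mul_sum,
          EuclideanSpace.real_norm_sq_eq, Finset.sum_const, Finset.card_univ, Fintype.card_fin,
          nsmul_eq_mul]
        push_cast
        ring
    _ = -(3 * ε ^ 2 * (rho ε x)⁻¹ ^ 5) := by
        rw [eq_sub_of_add_eq (rho_sq ε x).symm]
        field_simp
        ring

end RegularizedDistance

/-! ### Kernels of order `|x|⁻¹` -/

section Kernels

lemma tendsto_integral_mul_of_dominated {X ι : Type*} [TopologicalSpace X] [T2Space X]
    [MeasurableSpace X] [OpensMeasurableSpace X] {μ : Measure X} {l : Filter ι}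
    [l.IsCountablyGenerated] {f K₀ G : X → ℝ} {K : ι → X → ℝ} (hf : Continuous f)
    (hsupp : HasCompactSupport f) (hG : LocallyIntegrable G μ)
    (hmeas : ∀ᶠ ε in l, AEStronglyMeasurable (K ε) μ)
    (hle : ∀ᶠ ε in l, ∀ᵐ x ∂μ, |K ε x| ≤ G x)
    (hlim : ∀ᵐ x ∂μ, Tendsto (fun ε => K ε x) l (𝓝 (K₀ x))) :
    Tendsto (fun ε => ∫ x, f x * K ε x ∂μ) l (𝓝 (∫ x, f x * K₀ x ∂μ)) := by
  refine tendsto_integral_filter_of_dominated_convergence (fun x => |f x| * G x) ?_ ?_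
    (hG.integrable_smul_left_of_hasCompactSupport hf.abs hsupp.norm) ?_
  · filter_upwards [hmeas] with ε hε
    exact hf.aestronglyMeasurable.mul hε
  · filter_upwards [hle] with ε hε
    filter_upwards [hε] with x hx
    rw [norm_mul]
    exact mul_le_mul_of_nonneg_left hx (abs_nonneg _)
  · filter_upwards [hlim] with x hx
    exact hx.const_mul _

/-- The Hessian `δᵢⱼ |x|⁻¹ - xᵢ xⱼ |x|⁻³` of `|x|`. -/
def hessNorm (i j : Fin 3) (x : E3) : ℝ :=
  (if i = j then 1 else 0) * ‖x‖⁻¹ - x i * x j * ‖x‖⁻¹ ^ 3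

lemma abs_coord_mul_coord_le {n : Type*} [Fintype n] (x : EuclideanSpace ℝ n) (i j : n) :
    |x i * x j| ≤ ‖x‖ ^ 2 := by
  rw [abs_mul, sq]
  gcongr <;> exact PiLp.norm_apply_le x _

lemma abs_hess_le_of_norm_le {x : E3} (hx : x ≠ 0) {t : ℝ} (ht : ‖x‖ ≤ t) (i j : Fin 3) :
    |(if i = j then 1 else 0) * t⁻¹ - x i * x j * t⁻¹ ^ 3| ≤ 2 * ‖x‖⁻¹ := by
  have hx' : 0 < ‖x‖ := norm_pos_iff.mpr hx
  have ht' : 0 < t := hx'.trans_le ht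
  have hdelta : |(if i = j then 1 else 0) * t⁻¹| ≤ ‖x‖⁻¹ := by
    rw [abs_mul, abs_of_pos (inv_pos.mpr ht'), ← one_mul ‖x‖⁻¹]
    gcongr
    split_ifs <;> simp
  have hquad : |x i * x j * t⁻¹ ^ 3| ≤ ‖x‖⁻¹ := by
    calc |x i * x j * t⁻¹ ^ 3| = |x i * x j| * t⁻¹ ^ 3 := by
          rw [abs_mul, abs_of_pos (a := t⁻¹ ^ 3) (by positivity)]
      _ ≤ ‖x‖ ^ 2 * ‖x‖⁻¹ ^ 3 := by
          gcongr
          exact abs_coord_mul_coord_le x i j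
      _ = ‖x‖⁻¹ := by field_simp
  linarith [abs_sub ((if i = j then 1 else 0) * t⁻¹) (x i * x j * t⁻¹ ^ 3)]

lemma trace_hessNorm (x : E3) : ∑ i, hessNorm i i x = 2 * ‖x‖⁻¹ := by
  rcases eq_or_ne x 0 with rfl | hx
  · simp [hessNorm]
  have hx' : ‖x‖ ≠ 0 := norm_ne_zero_iff.mpr hx
  calc ∑ i, hessNorm i i x = 3 * ‖x‖⁻¹ - ‖x‖ ^ 2 * ‖x‖⁻¹ ^ 3 := by
        simp only [hessNorm, EuclideanSpace.real_norm_sq_eq, Fin.sum_univ_three, if_true]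
        ring
    _ = 2 * ‖x‖⁻¹ := by field_simp; norm_num

lemma locallyIntegrable_inv_norm : LocallyIntegrable fun x : E3 => ‖x‖⁻¹ := by
  refine locallyIntegrable_of_norm_le_rpow (C := 1) (α := 1) (by simp) (by simp) ?_
    measurable_norm.inv.aestronglyMeasurable
  exact .of_forall fun x => by simp [Real.rpow_neg_one]

lemma locallyIntegrable_hessNorm (i j : Fin 3) : LocallyIntegrable (hessNorm i j) := by
  have hmeas : Measurable (hessNorm i j) := by
    unfold hessNorm
    fun_prop
  refine (locallyIntegrable_inv_norm.smul (2 : ℝ)).mono hmeas.aestronglyMeasurable ?_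
  filter_upwards [Measure.ae_ne volume 0] with x hx
  simpa [hessNorm] using abs_hess_le_of_norm_le hx le_rfl i j

variable {f : E3 → ℝ}

lemma tendsto_integral_mul_rho (hf : Continuous f) (hsupp : HasCompactSupport f) :
    Tendsto (fun ε => ∫ x, f x * rho ε x) (𝓝[≠] 0) (𝓝 (∫ x, f x * ‖x‖)) := by
  have hG : Continuous fun x : E3 => ‖x‖ + 1 := by fun_prop
  refine tendsto_integral_mul_of_dominated hf hsupp hG.locallyIntegrable ?_ ?_
    (.of_forall tendsto_rho)
  · filter_upwards [self_mem_nhdsWithin] with ε hε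
    exact (contDiff_rho (n := 0) hε).continuous.aestronglyMeasurable
  · filter_upwards [nhdsWithin_le_nhds (Metric.ball_mem_nhds 0 one_pos)] with ε hε
    rw [mem_ball_zero_iff, Real.norm_eq_abs] at hε
    refine .of_forall fun x => ?_
    rw [abs_of_nonneg (rho_nonneg ε x)]
    linarith [rho_le_norm_add_abs ε x]

lemma tendsto_integral_mul_rho_inv (hf : Continuous f) (hsupp : HasCompactSupport f) :
    Tendsto (fun ε => ∫ x, f x * (rho ε x)⁻¹) (𝓝[≠] 0) (𝓝 (∫ x, f x * ‖x‖⁻¹)) := by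
  refine tendsto_integral_mul_of_dominated hf hsupp locallyIntegrable_inv_norm ?_
    (.of_forall fun ε => ?_) ?_
  · filter_upwards [self_mem_nhdsWithin] with ε hε
    exact (contDiff_rho_inv (n := 0) hε).continuous.aestronglyMeasurable
  · filter_upwards [Measure.ae_ne volume 0] with x hx
    rw [abs_of_nonneg (inv_nonneg.mpr (rho_nonneg ε x))]
    exact inv_anti₀ (norm_pos_iff.mpr hx) (norm_le_rho ε x)
  · filter_upwards [Measure.ae_ne volume 0] with x hx
    exact (tendsto_rho x).inv₀ (norm_ne_zero_iff.mpr hx)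

lemma tendsto_integral_mul_pd_pd_rho (hf : Continuous f) (hsupp : HasCompactSupport f)
    (i j : Fin 3) :
    Tendsto (fun ε => ∫ x, f x * pd i (pd j (rho ε)) x) (𝓝[≠] 0)
      (𝓝 (∫ x, f x * hessNorm i j x)) := by
  refine tendsto_integral_mul_of_dominated hf hsupp
    (locallyIntegrable_inv_norm.smul (2 : ℝ)) ?_ ?_ ?_
  · filter_upwards [self_mem_nhdsWithin] with ε hε
    exact (continuous_pd_pd (contDiff_rho hε) i j).aestronglyMeasurable
  · filter_upwards [self_mem_nhdsWithin] with ε hε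
    filter_upwards [Measure.ae_ne volume 0] with x hx
    rw [pd_pd_rho hε]
    exact abs_hess_le_of_norm_le hx (norm_le_rho ε x) i j
  · filter_upwards [Measure.ae_ne volume 0] with x hx
    have hinv := (tendsto_rho x).inv₀ (norm_ne_zero_iff.mpr hx)
    refine ((hinv.const_mul (if i = j then 1 else 0)).sub
      ((hinv.pow 3).const_mul (x i * x j))).congr' ?_
    filter_upwards [self_mem_nhdsWithin] with ε hε
    rw [pd_pd_rho hε]

lemma integral_pd_pd_mul_norm (hf : ContDiff ℝ 2 f) (hsupp : HasCompactSupport f) (i j : Fin 3) :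
    ∫ x, pd i (pd j f) x * ‖x‖ = ∫ x, f x * hessNorm i j x := by
  refine tendsto_nhds_unique (tendsto_integral_mul_rho (continuous_pd_pd hf i j)
    (hasCompactSupport_pd (hasCompactSupport_pd hsupp j) i)) ?_
  refine (tendsto_integral_mul_pd_pd_rho hf.continuous hsupp i j).congr' ?_
  filter_upwards [self_mem_nhdsWithin] with ε hε
  exact (integral_pd_pd_mul hf hsupp (contDiff_rho hε) i j).symm

lemma sum_integral_mul_hessNorm_self (hf : Continuous f) (hsupp : HasCompactSupport f) :
    ∑ i, ∫ x, f x * hessNorm i i x = 2 * ∫ x, f x * ‖x‖⁻¹ := by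
  have hint (i : Fin 3) : Integrable fun x => f x * hessNorm i i x :=
    (locallyIntegrable_hessNorm i i).integrable_smul_left_of_hasCompactSupport hf hsupp
  rw [← integral_finsetSum _ fun i _ => hint i, ← integral_const_mul]
  simp only [← Finset.mul_sum, trace_hessNorm, mul_left_comm]

lemma integral_lap_mul_norm (hf : ContDiff ℝ 2 f) (hsupp : HasCompactSupport f) :
    ∫ x, lap f x * ‖x‖ = 2 * ∫ x, f x * ‖x‖⁻¹ := by
  rw [← sum_integral_mul_hessNorm_self hf.continuous hsupp]
  simp only [lap, Finset.sum_mul, ← integral_pd_pd_mul_norm hf hsupp]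
  exact integral_finsetSum _ fun i _ =>
    ((continuous_pd_pd hf i i).mul continuous_norm).integrable_of_hasCompactSupport
      (hasCompactSupport_pd (hasCompactSupport_pd hsupp i) i).mul_right

lemma integral_lap_mul_hessNorm (hf : IsTest f) (i j : Fin 3) :
    ∫ x, lap f x * hessNorm i j x = 2 * ∫ x, pd i (pd j f) x * ‖x‖⁻¹ := by
  rw [← integral_pd_pd_mul_norm (hf.lap.contDiff 2) hf.lap.2, pd_lap (hf.contDiff 3),
    pd_lap ((hf.pd j).contDiff 3),
    integral_lap_mul_norm (((hf.pd j).pd i).contDiff 2) ((hf.pd j).pd i).2]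

lemma sum_integral_pd_mul_hessNorm (hf : IsTest f) (j : Fin 3) :
    ∑ i, ∫ x, pd i f x * hessNorm i j x = 2 * ∫ x, pd j f x * ‖x‖⁻¹ := by
  rw [← sum_integral_mul_hessNorm_self (hf.pd j).continuous (hf.pd j).2]
  refine Finset.sum_congr rfl fun i _ => ?_
  rw [← integral_pd_pd_mul_norm ((hf.pd i).contDiff 2) (hf.pd i).2,
    ← integral_pd_pd_mul_norm ((hf.pd j).contDiff 2) (hf.pd j).2, pd_comm (hf.contDiff 2) j i]

end Kernels

/-! ### The fundamental solution -/

section FundamentalSolution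

lemma hasDerivAt_mul_inv_sqrt_pow_three (r : ℝ) :
    HasDerivAt (fun r : ℝ => (r * (√(r ^ 2 + 1))⁻¹) ^ 3)
      (r ^ 2 * (3 * (√(r ^ 2 + 1))⁻¹ ^ 5)) r := by
  have hpos : 0 < r ^ 2 + 1 := by positivity
  have hsqrt : √(r ^ 2 + 1) ≠ 0 := (Real.sqrt_pos.mpr hpos).ne'
  have hsq : √(r ^ 2 + 1) ^ 2 = r ^ 2 + 1 := Real.sq_sqrt hpos.le
  have hroot : HasDerivAt (fun r : ℝ => √(r ^ 2 + 1)) (r / √(r ^ 2 + 1)) r := by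
    convert ((hasDerivAt_pow 2 r).add_const 1).sqrt hpos.ne' using 1
    field_simp
    ring
  refine (((hasDerivAt_id r).mul (hroot.inv hsqrt)).pow 3).congr_deriv ?_
  simp only [id, Pi.mul_apply, Pi.inv_apply]
  field_simp
  rw [div_pow, hsq]
  field_simp
  ring

lemma tendsto_mul_inv_sqrt_pow_three :
    Tendsto (fun r : ℝ => (r * (√(r ^ 2 + 1))⁻¹) ^ 3) atTop (𝓝 1) := by
  have hinv : Tendsto (fun r : ℝ => 1 + (r ^ 2)⁻¹) atTop (𝓝 1) := by
    simpa using (tendsto_pow_atTop two_ne_zero).inv_tendsto_atTop.const_add (1 : ℝ)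
  have hlim := (hinv.sqrt.inv₀ (by simp)).pow 3
  simp only [Real.sqrt_one, inv_one, one_pow] at hlim
  refine hlim.congr' ?_
  filter_upwards [eventually_gt_atTop 0] with r hr
  rw [show 1 + (r ^ 2)⁻¹ = (r ^ 2 + 1) / r ^ 2 by field_simp, Real.sqrt_div' _ (sq_nonneg r),
    Real.sqrt_sq hr.le, inv_div, div_eq_mul_inv]

lemma integral_rho_inv_pow_five : ∫ z, 3 * (rho 1 z)⁻¹ ^ 5 = 4 * π := by
  have hradial : ∫ r in Set.Ioi (0 : ℝ), r ^ 2 * (3 * (√(r ^ 2 + 1))⁻¹ ^ 5) = 1 := by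
    rw [integral_Ioi_of_hasDerivAt_of_nonneg' (fun r _ => hasDerivAt_mul_inv_sqrt_pow_three r)
      (fun r _ => by positivity) tendsto_mul_inv_sqrt_pow_three]
    simp
  have hpolar := integral_fun_norm_addHaar (volume : Measure E3)
    fun r => 3 * (√(r ^ 2 + 1))⁻¹ ^ 5
  simp only [finrank_euclideanSpace, Fintype.card_fin, smul_eq_mul, Nat.add_one_sub_one, hradial,
    measureReal_def, EuclideanSpace.volume_ball_fin_three, ENNReal.ofReal_one, one_pow, one_mul,
    mul_one] at hpolar
  rw [ENNReal.toReal_ofReal (by positivity)] at hpolar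
  simp only [rho, one_pow]
  rw [hpolar, nsmul_eq_mul]
  ring

lemma tendsto_norm_pow_three_mul_rho_inv_pow_five :
    Tendsto (fun x : E3 => ‖x‖ ^ 3 * (rho 1 x)⁻¹ ^ 5) (Bornology.cobounded E3) (𝓝 0) := by
  have hinv : Tendsto (fun x : E3 => (rho 1 x)⁻¹ ^ 2) (Bornology.cobounded E3) (𝓝 0) := by
    simpa using (tendsto_inv_atTop_zero.comp
      (tendsto_atTop_mono (norm_le_rho 1) tendsto_norm_cobounded_atTop)).pow 2
  refine squeeze_zero (fun x => ?_) (fun x => ?_) hinv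
  · have := rho_nonneg 1 x
    positivity
  · have := rho_pos one_ne_zero x
    calc ‖x‖ ^ 3 * (rho 1 x)⁻¹ ^ 5 ≤ rho 1 x ^ 3 * (rho 1 x)⁻¹ ^ 5 := by
          gcongr
          exact norm_le_rho 1 x
      _ = (rho 1 x)⁻¹ ^ 2 := by field_simp

lemma lap_rho_inv_inv {c : ℝ} (hc : 0 < c) (x : E3) :
    lap (fun x => (rho c⁻¹ x)⁻¹) x = -(c ^ 3 * (3 * (rho 1 (c • x))⁻¹ ^ 5)) := by
  have hscale : rho c⁻¹ x = c⁻¹ * rho 1 (c • x) := by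
    simpa [hc.ne', abs_of_pos hc] using rho_smul c⁻¹ (c • x)
  have := (rho_pos one_ne_zero (c • x)).ne'
  simp only [lap_rho_inv (inv_ne_zero hc.ne'), hscale]
  field_simp

lemma integral_lap_mul_inv_norm {f : E3 → ℝ} (hf : ContDiff ℝ 2 f) (hsupp : HasCompactSupport f) :
    ∫ x, lap f x * ‖x‖⁻¹ = -(4 * π * f 0) := by
  set φ : E3 → ℝ := fun z => (4 * π)⁻¹ * (3 * (rho 1 z)⁻¹ ^ 5)
  have hφ (z : E3) : 0 ≤ φ z := by
    have := rho_nonneg 1 z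
    positivity
  have hmass : ∫ z, φ z = 1 := by
    rw [integral_const_mul, integral_rho_inv_pow_five]
    field_simp
  have hdecay : Tendsto (fun z => ‖z‖ ^ Module.finrank ℝ E3 * φ z) (Bornology.cobounded E3)
      (𝓝 0) := by
    simpa [φ, mul_left_comm, mul_assoc] using
      tendsto_norm_pow_three_mul_rho_inv_pow_five.const_mul ((4 * π)⁻¹ * 3)
  have hpeak := tendsto_integral_comp_smul_smul_of_integrable hφ hmass hdecay
    (hf.continuous.integrable_of_hasCompactSupport hsupp) hf.continuous.continuousAt
  have hinv : Tendsto (fun c : ℝ => c⁻¹) atTop (𝓝[≠] 0) :=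
    tendsto_inv_atTop_nhdsGT_zero.mono_right (nhdsWithin_mono _ fun _ hx => ne_of_gt hx)
  have hlim := (tendsto_integral_mul_rho_inv (continuous_lap hf) (hasCompactSupport_lap hsupp)).comp
    hinv
  refine tendsto_nhds_unique hlim ((hpeak.const_mul (4 * π)).neg.congr' ?_)
  filter_upwards [eventually_gt_atTop 0] with c hc
  rw [Function.comp_apply, integral_lap_mul hf hsupp (contDiff_rho_inv (inv_ne_zero hc.ne')),
    ← integral_const_mul, ← integral_neg]
  congr with x
  rw [lap_rho_inv_inv hc, finrank_euclideanSpace_fin, smul_eq_mul]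
  simp only [φ]
  field_simp

end FundamentalSolution

/-! ### The fundamental matrix as a distribution -/

section FundamentalMatrix

lemma Phi_comm (α : ℝ) (x : E3) (i j : Fin 3) : Phi α x i j = Phi α x j i := by
  simp only [Phi, eq_comm, mul_comm]

lemma Phi_eq (α : ℝ) (x : E3) (i j : Fin 3) :
    Phi α x i j = cA α * ((1 + α / (α + 2)) * ((if i = j then 1 else 0) * ‖x‖⁻¹)
      - α / (α + 2) * hessNorm i j x) := by
  rw [Phi, hessNorm]
  ring

lemma locallyIntegrable_Phi (α : ℝ) (i j : Fin 3) : LocallyIntegrable fun x => Phi α x i j := by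
  simp only [Phi_eq]
  exact (((locallyIntegrable_inv_norm.smul (if i = j then (1 : ℝ) else 0)).smul
    (1 + α / (α + 2))).sub ((locallyIntegrable_hessNorm i j).smul (α / (α + 2)))).smul (cA α)

variable {f : E3 → ℝ}

lemma IsTest.integral_mul_Phi (hf : IsTest f) (α : ℝ) (i j : Fin 3) :
    ∫ x, f x * Phi α x i j = cA α * ((1 + α / (α + 2)) * ((if i = j then 1 else 0) *
      ∫ x, f x * ‖x‖⁻¹) - α / (α + 2) * ∫ x, f x * hessNorm i j x) := by
  simp only [← integral_const_mul]
  rw [← integral_sub, ← integral_const_mul]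
  · congr with x
    rw [Phi_eq]
    ring
  · exact ((hf.integrable_mul locallyIntegrable_inv_norm).const_mul _).const_mul _
  · exact (hf.integrable_mul (locallyIntegrable_hessNorm i j)).const_mul _

lemma integral_lap_mul_Phi (hf : IsTest f) (α : ℝ) (i j : Fin 3) :
    ∫ x, lap f x * Phi α x i j = -(cA α * ((1 + α / (α + 2)) * ((if i = j then 1 else 0) *
      (4 * π * f 0)) + 2 * (α / (α + 2)) * ∫ x, pd i (pd j f) x * ‖x‖⁻¹)) := by
  rw [hf.lap.integral_mul_Phi, integral_lap_mul_inv_norm (hf.contDiff 2) hf.2,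
    integral_lap_mul_hessNorm hf]
  ring

lemma sum_integral_pd_mul_Phi (hf : IsTest f) (α : ℝ) (j : Fin 3) :
    ∑ i, ∫ x, pd i f x * Phi α x i j =
      cA α * (1 - α / (α + 2)) * ∫ x, pd j f x * ‖x‖⁻¹ := by
  simp only [(hf.pd _).integral_mul_Phi, ← Finset.mul_sum, Finset.sum_sub_distrib,
    sum_integral_pd_mul_hessNorm hf, ite_mul, one_mul, zero_mul, Finset.sum_ite_eq',
    Finset.mem_univ, if_true]
  ring

end FundamentalMatrix

/-! ### Coercivity of the quadratic form -/

section QuadraticForm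

open Matrix

lemma exists_pos_mul_le_binary_form {A B C : ℝ} (hA : 0 < A) (hdisc : B ^ 2 < A * C) :
    ∃ κ > 0, ∀ x y : ℝ, κ * (x ^ 2 + y ^ 2) ≤ A * x ^ 2 + 2 * B * x * y + C * y ^ 2 := by
  have hC : 0 < C := pos_of_mul_pos_right ((sq_nonneg B).trans_lt hdisc) hA.le
  refine ⟨(A * C - B ^ 2) / (A + C), div_pos (sub_pos.mpr hdisc) (by positivity), fun x y => ?_⟩
  rw [div_mul_eq_mul_div, div_le_iff₀ (by positivity)]
  nlinarith [sq_nonneg (A * x + B * y), sq_nonneg (B * x + C * y)]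

/-- The quadratic form in the Jacobian `M = Du` whose integral against `c_α |x|⁻¹` is the bulk part
of the energy; the vector `w` stands for the direction `x / |x|`. -/
def lameForm {n : Type*} [Fintype n] (α : ℝ) (M : Matrix n n ℝ) (w : n → ℝ) : ℝ :=
  (Mᵀ * M).trace + α / (α + 2) * ((α + 1) * M.trace ^ 2 + α * M.trace * (w ⬝ᵥ M *ᵥ w)
    + (w ᵥ* M) ⬝ᵥ (w ᵥ* M) + (M * M).trace)

lemma trace_transpose_mul_self {m n : Type*} [Fintype m] [Fintype n] (M : Matrix m n ℝ) :
    (Mᵀ * M).trace = ∑ i, ∑ k, M i k ^ 2 := by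
  simp only [trace, diag_apply, mul_apply, transpose_apply, ← sq]
  exact Finset.sum_comm

variable {n : Type*} [Fintype n]

lemma transpose_conj_transpose (U M : Matrix n n ℝ) : (U * M * Uᵀ)ᵀ = U * Mᵀ * Uᵀ := by
  simp only [transpose_mul, transpose_transpose, Matrix.mul_assoc]

variable [DecidableEq n]

lemma trace_conj_of_transpose_mul_self {U : Matrix n n ℝ} (hU : Uᵀ * U = 1) (M : Matrix n n ℝ) :
    (U * M * Uᵀ).trace = M.trace := by
  rw [trace_mul_comm, ← Matrix.mul_assoc, hU, Matrix.one_mul]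

lemma mulVec_dotProduct_mulVec_of_transpose_mul_self {U : Matrix n n ℝ} (hU : Uᵀ * U = 1)
    (v w : n → ℝ) : (U *ᵥ v) ⬝ᵥ (U *ᵥ w) = v ⬝ᵥ w := by
  rw [dotProduct_mulVec, ← mulVec_transpose, mulVec_mulVec, hU, one_mulVec]

lemma conj_mul_conj_of_transpose_mul_self {U : Matrix n n ℝ} (hU : Uᵀ * U = 1)
    (A B : Matrix n n ℝ) : U * A * Uᵀ * (U * B * Uᵀ) = U * (A * B) * Uᵀ := by
  calc U * A * Uᵀ * (U * B * Uᵀ) = U * A * (Uᵀ * U) * (B * Uᵀ) := by simp only [Matrix.mul_assoc]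
    _ = U * (A * B) * Uᵀ := by rw [hU, Matrix.mul_one]; simp only [Matrix.mul_assoc]

lemma lameForm_conj {U : Matrix n n ℝ} (hU : Uᵀ * U = 1) (α : ℝ) (M : Matrix n n ℝ) (w : n → ℝ) :
    lameForm α (U * M * Uᵀ) (U *ᵥ w) = lameForm α M w := by
  have hmulVec : (U * M * Uᵀ) *ᵥ (U *ᵥ w) = U *ᵥ (M *ᵥ w) := by
    simp only [mulVec_mulVec, Matrix.mul_assoc, hU, Matrix.mul_one]
  have hvecMul : (U *ᵥ w) ᵥ* (U * M * Uᵀ) = U *ᵥ (w ᵥ* M) := by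
    rw [← mulVec_transpose, transpose_conj_transpose, ← mulVec_transpose]
    simp only [mulVec_mulVec, Matrix.mul_assoc, hU, Matrix.mul_one]
  simp only [lameForm, transpose_conj_transpose, conj_mul_conj_of_transpose_mul_self hU, hmulVec,
    hvecMul, trace_conj_of_transpose_mul_self hU,
    mulVec_dotProduct_mulVec_of_transpose_mul_self hU]

lemma exists_orthogonal_mulVec_eq_single {w : n → ℝ} (hw : w ⬝ᵥ w = 1) (i : n) :
    ∃ U : Matrix n n ℝ, Uᵀ * U = 1 ∧ U *ᵥ w = Pi.single i 1 := by
  have hw' : ‖WithLp.toLp 2 w‖ = 1 := by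
    rw [EuclideanSpace.norm_eq, Real.sqrt_eq_one]
    simpa [dotProduct, sq] using hw
  have horth : Orthonormal ℝ (({i} : Set n).domRestrict fun _ => WithLp.toLp 2 w) :=
    ⟨fun _ => hw', fun j k hjk => (hjk (Subsingleton.elim j k)).elim⟩
  obtain ⟨b, hb⟩ := horth.exists_orthonormalBasis_extension_of_card_eq (by simp)
  have hbw : b i = WithLp.toLp 2 w := hb i rfl
  have hinner (j k : n) : (b j).ofLp ⬝ᵥ (b k).ofLp = if j = k then 1 else 0 := by
    rw [dotProduct_comm, ← orthonormal_iff_ite.mp b.orthonormal j k]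
    simp [EuclideanSpace.inner_eq_star_dotProduct]
  refine ⟨of fun j => (b j).ofLp, ?_, ?_⟩
  · rw [mul_eq_one_comm]
    ext j k
    exact (hinner j k).trans (one_apply ..).symm
  · ext j
    have hj := hinner j i
    rw [hbw] at hj
    rw [Pi.single_apply]
    exact hj

/-- In a basis whose first vector is `w`, the form splits into binary forms in the pairs
`(M₀₀, M₁₁ + M₂₂)`, `(M₀ₖ, Mₖ₀)` and `(M₁₂, M₂₁)` and a multiple of `(M₁₁ - M₂₂)²`. -/
lemma lameForm_single_zero {α : ℝ} (hα : α + 2 ≠ 0) (M : Matrix (Fin 3) (Fin 3) ℝ) :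
    lameForm α M (Pi.single 0 1) =
      (2 * ((α + 1) ^ 2 / (α + 2)) * M 0 0 ^ 2
          + 2 * (α * (3 * α + 2) / (2 * (α + 2))) * M 0 0 * (M 1 1 + M 2 2)
          + (α + 1) ^ 2 / (α + 2) * (M 1 1 + M 2 2) ^ 2)
        + ((1 + α / (α + 2)) * M 0 1 ^ 2 + 2 * (α / (α + 2)) * M 0 1 * M 1 0 + 1 * M 1 0 ^ 2)
        + ((1 + α / (α + 2)) * M 0 2 ^ 2 + 2 * (α / (α + 2)) * M 0 2 * M 2 0 + 1 * M 2 0 ^ 2)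
        + (1 * M 1 2 ^ 2 + 2 * (α / (α + 2)) * M 1 2 * M 2 1 + 1 * M 2 1 ^ 2)
        + (1 + α / (α + 2)) / 2 * (M 1 1 - M 2 2) ^ 2 := by
  simp only [lameForm, trace, diag, dotProduct, mulVec, vecMul, Matrix.mul_apply,
    transpose_apply, Fin.sum_univ_three, Pi.single_apply]
  simp only [Fin.isValue, Fin.reduceEq, if_true, if_false]
  field_simp
  ring

lemma neg_three_quarters_lt_of_lame_criterion {α : ℝ}
    (h : α * (3 * α + 2) < 2 * √2 * (α + 1) ^ 2) : -(3 / 4) < α := by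
  have hsqrt : 2 * √2 ≤ 3 := by
    nlinarith [Real.sq_sqrt (zero_le_two (α := ℝ)), Real.sqrt_nonneg 2]
  nlinarith [mul_le_mul_of_nonneg_right hsqrt (sq_nonneg (α + 1))]

lemma sq_lt_of_lame_criterion {α : ℝ} (h : α * (3 * α + 2) < 2 * √2 * (α + 1) ^ 2) :
    (α * (3 * α + 2)) ^ 2 < 8 * (α + 1) ^ 4 := by
  have hsqrt : 7 / 5 ≤ √2 := Real.le_sqrt_of_sq_le (by norm_num)
  have hlower : -(2 * √2 * (α + 1) ^ 2) < α * (3 * α + 2) := by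
    nlinarith [mul_le_mul_of_nonneg_right hsqrt (sq_nonneg (α + 1)), sq_nonneg (α + 19 / 29)]
  calc (α * (3 * α + 2)) ^ 2 < (2 * √2 * (α + 1) ^ 2) ^ 2 := sq_lt_sq' hlower h
    _ = 4 * √2 ^ 2 * (α + 1) ^ 4 := by ring
    _ = 8 * (α + 1) ^ 4 := by rw [Real.sq_sqrt zero_le_two]; ring

lemma exists_pos_mul_le_lameForm_single_zero {α : ℝ}
    (h : α * (3 * α + 2) < 2 * √2 * (α + 1) ^ 2) :
    ∃ κ > 0, ∀ M : Matrix (Fin 3) (Fin 3) ℝ,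
      κ * (Mᵀ * M).trace ≤ lameForm α M (Pi.single 0 1) := by
  have hα := neg_three_quarters_lt_of_lame_criterion h
  have h1 : 0 < α + 1 := by linarith
  have h2 : 0 < α + 2 := by linarith
  have ha : 0 < 1 + α / (α + 2) := by
    rw [← sub_neg_eq_add, ← neg_div, sub_pos, div_lt_one h2]
    linarith
  obtain ⟨κ₁, hκ₁, hdiag⟩ := exists_pos_mul_le_binary_form
    (A := 2 * ((α + 1) ^ 2 / (α + 2))) (B := α * (3 * α + 2) / (2 * (α + 2)))
    (C := (α + 1) ^ 2 / (α + 2)) (by positivity) (by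
      have := sq_lt_of_lame_criterion h
      field_simp
      linarith)
  obtain ⟨κ₂, hκ₂, haxial⟩ := exists_pos_mul_le_binary_form (B := α / (α + 2)) (C := 1) ha (by
    field_simp
    nlinarith)
  obtain ⟨κ₃, hκ₃, hplanar⟩ := exists_pos_mul_le_binary_form (A := 1) (B := α / (α + 2)) (C := 1)
    one_pos (by
      field_simp
      nlinarith)
  refine ⟨min κ₁ (min κ₂ κ₃), by positivity, fun M => ?_⟩
  set κ := min κ₁ (min κ₂ κ₃)
  have hκκ₁ : κ ≤ κ₁ := min_le_left _ _
  have hκκ₂ : κ ≤ κ₂ := (min_le_right _ _).trans (min_le_left _ _)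
  have hκκ₃ : κ ≤ κ₃ := (min_le_right _ _).trans (min_le_right _ _)
  have hκ : 0 < κ := by positivity
  rw [trace_transpose_mul_self, lameForm_single_zero h2.ne']
  simp only [Fin.sum_univ_three]
  have h₁ := (mul_le_mul_of_nonneg_right hκκ₁ (by positivity)).trans (hdiag (M 0 0) (M 1 1 + M 2 2))
  have h₂ (k : Fin 3) :=
    (mul_le_mul_of_nonneg_right hκκ₂ (by positivity)).trans (haxial (M 0 k) (M k 0))
  have h₃ (x y : ℝ) := (mul_le_mul_of_nonneg_right hκκ₃ (by positivity)).trans (hplanar x y)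
  nlinarith [h₁, h₂ 1, h₂ 2, h₃ (M 1 2) (M 2 1), h₃ ((M 1 1 - M 2 2) / 2) ((M 1 1 - M 2 2) / 2),
    mul_nonneg hκ.le (sq_nonneg (M 1 1 + M 2 2))]

lemma exists_pos_mul_le_lameForm {α : ℝ} (h : α * (3 * α + 2) < 2 * √2 * (α + 1) ^ 2) :
    ∃ κ > 0, ∀ (M : Matrix (Fin 3) (Fin 3) ℝ) (w : Fin 3 → ℝ), w ⬝ᵥ w = 1 →
      κ * (Mᵀ * M).trace ≤ lameForm α M w := by
  obtain ⟨κ, hκ, hcoercive⟩ := exists_pos_mul_le_lameForm_single_zero h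
  refine ⟨κ, hκ, fun M w hw => ?_⟩
  obtain ⟨U, hU, hUw⟩ := exists_orthogonal_mulVec_eq_single hw 0
  have htrace : ((U * M * Uᵀ)ᵀ * (U * M * Uᵀ)).trace = (Mᵀ * M).trace := by
    rw [transpose_conj_transpose, conj_mul_conj_of_transpose_mul_self hU,
      trace_conj_of_transpose_mul_self hU]
  calc κ * (Mᵀ * M).trace ≤ lameForm α (U * M * Uᵀ) (Pi.single 0 1) := by
        rw [← htrace]; exact hcoercive _
    _ = lameForm α M w := by rw [← hUw, lameForm_conj hU]

end QuadraticForm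

/-! ### The energy identity -/

section Energy

open Matrix

/-- The Jacobian matrix `Du(x)`, with entries `(Du)ᵢₖ = ∂ₖ uᵢ`. -/
def jac (u : E3 → Fin 3 → ℝ) (x : E3) : Matrix (Fin 3) (Fin 3) ℝ :=
  .of fun i k => pd k (fun z => u z i) x

lemma divg_eq_trace_jac (u : E3 → Fin 3 → ℝ) (x : E3) : divg u x = (jac u x).trace := rfl

variable {u : E3 → Fin 3 → ℝ}

lemma isTest_divg (hu : ∀ i, IsTest fun x => u x i) : IsTest (divg u) :=
  IsTest.sum fun k _ => (hu k).pd k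

lemma pd_divg (hu : ∀ i, IsTest fun x => u x i) (j : Fin 3) :
    pd j (divg u) = fun x => ∑ i, pd j (pd i fun x => u x i) x :=
  pd_sum (fun i _ => ((hu i).pd i).differentiable) j

lemma sum_pd_pd_mul (hu : ∀ i, IsTest fun x => u x i) (x : E3) :
    ∑ i, ∑ j, pd i (pd j (fun x => u x i * u x j)) x =
      2 * ∑ j, pd j (fun x => divg u x * u x j) x
        - ((jac u x).trace ^ 2 - (jac u x * jac u x).trace) := by
  have hdiv (j : Fin 3) : pd j (fun x => divg u x * u x j) x =
      (∑ i, pd j (pd i fun x => u x i) x) * u x j + (jac u x).trace * jac u x j j := by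
    rw [pd_mul (isTest_divg hu).differentiable (hu j).differentiable, pd_divg hu]
    rfl
  have hprod (i j : Fin 3) : pd i (pd j (fun x => u x i * u x j)) x =
      pd j (pd i fun x => u x i) x * u x j + jac u x i j * jac u x j i
        + (jac u x i i * jac u x j j + u x i * pd i (pd j fun x => u x j) x) := by
    rw [pd_pd_mul ((hu i).contDiff 2) ((hu j).contDiff 2), pd_comm ((hu i).contDiff 2)]
    rfl
  simp only [hdiv, hprod, trace, diag_apply, mul_apply, Fin.sum_univ_three]
  ring

lemma sum_lame_mul_Phi_mul (hu : ∀ i, IsTest fun x => u x i) (α : ℝ) (x : E3) :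
    ∑ i, ∑ j, lame α u x i * Phi α x i j * u x j =
      -(1 / 2) * (∑ i, ∑ j, lap (fun x => u x i * u x j) x * Phi α x i j)
      - α * (∑ j, ∑ i, pd i (fun x => divg u x * u x j) x * Phi α x i j)
      + ∑ i, ∑ j, (jac u x * (jac u x)ᵀ + α • (jac u x).trace • (jac u x)ᵀ) i j * Phi α x i j := by
  have hlap (i j : Fin 3) : lap (fun x => u x i * u x j) x =
      lap (fun x => u x i) x * u x j + 2 * (jac u x * (jac u x)ᵀ) i j
        + u x i * lap (fun x => u x j) x := by
    rw [lap_mul ((hu i).contDiff 2) ((hu j).contDiff 2)]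
    rfl
  have hdiv (i j : Fin 3) : pd i (fun x => divg u x * u x j) x =
      pd i (divg u) x * u x j + ((jac u x).trace • (jac u x)ᵀ) i j := by
    rw [pd_mul (isTest_divg hu).differentiable (hu j).differentiable]
    rfl
  have hsymm : ∑ i, ∑ j, u x i * lap (fun x => u x j) x * Phi α x i j =
      ∑ i, ∑ j, lap (fun x => u x i) x * u x j * Phi α x i j := by
    rw [Finset.sum_comm]
    exact Finset.sum_congr rfl fun i _ => Finset.sum_congr rfl fun j _ => by
      rw [Phi_comm, mul_comm (u x j)]
  rw [Finset.sum_comm (f := fun j i => pd i (fun x => divg u x * u x j) x * Phi α x i j)]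
  simp only [lame, hlap, hdiv, Matrix.add_apply, Matrix.smul_apply, smul_eq_mul, add_mul,
    Finset.sum_add_distrib, hsymm]
  simp only [Fin.sum_univ_three]
  ring

lemma isTest_jac (hu : ∀ i, IsTest fun x => u x i) (i k : Fin 3) : IsTest fun x => jac u x i k :=
  (hu i).pd k

lemma isTest_jac_mul_transpose_add (hu : ∀ i, IsTest fun x => u x i) (α : ℝ) (i j : Fin 3) :
    IsTest fun x => (jac u x * (jac u x)ᵀ + α • (jac u x).trace • (jac u x)ᵀ) i j :=
  (IsTest.sum (s := Finset.univ) fun k _ => (isTest_jac hu i k).mul (isTest_jac hu j k)).add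
    (((isTest_divg hu).mul (isTest_jac hu j i)).const_mul α)

lemma isTest_nullLagrangian (hu : ∀ i, IsTest fun x => u x i) :
    IsTest fun x => (jac u x).trace ^ 2 - (jac u x * jac u x).trace := by
  have hmul : IsTest fun x => (jac u x * jac u x).trace :=
    IsTest.sum fun i _ => IsTest.sum (s := Finset.univ) fun k _ =>
      (isTest_jac hu i k).mul (isTest_jac hu k i)
  simpa only [sq, sub_eq_add_neg, neg_one_mul, divg_eq_trace_jac] using
    ((isTest_divg hu).mul (isTest_divg hu)).add (hmul.const_mul (-1))

lemma integral_sum_sum {X ι κ : Type*} [MeasurableSpace X] {μ : Measure X} [Fintype ι] [Fintype κ]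
    {F : ι → κ → X → ℝ} (hF : ∀ i j, Integrable (F i j) μ) :
    ∫ x, ∑ i, ∑ j, F i j x ∂μ = ∑ i, ∑ j, ∫ x, F i j x ∂μ := by
  rw [integral_finsetSum _ fun i _ => integrable_finsetSum _ fun j _ => hF i j]
  simp only [integral_finsetSum _ fun j _ => hF _ j]

lemma sum_integral_lap_mul_Phi (hu : ∀ i, IsTest fun x => u x i) (α : ℝ) :
    ∑ i, ∑ j, ∫ x, lap (fun x => u x i * u x j) x * Phi α x i j =
      -(cA α * ((1 + α / (α + 2)) * (4 * π * ∑ i, u 0 i ^ 2) + 2 * (α / (α + 2)) *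
        (2 * (∑ j, ∫ x, pd j (fun x => divg u x * u x j) x * ‖x‖⁻¹)
          - ∫ x, ((jac u x).trace ^ 2 - (jac u x * jac u x).trace) * ‖x‖⁻¹))) := by
  have hhess : ∑ i, ∑ j, ∫ x, pd i (pd j (fun x => u x i * u x j)) x * ‖x‖⁻¹ =
      2 * (∑ j, ∫ x, pd j (fun x => divg u x * u x j) x * ‖x‖⁻¹)
        - ∫ x, ((jac u x).trace ^ 2 - (jac u x * jac u x).trace) * ‖x‖⁻¹ := by
    have hdiv (j : Fin 3) := ((((isTest_divg hu).mul (hu j)).pd j).integrable_mul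
      locallyIntegrable_inv_norm)
    rw [← integral_sum_sum fun i j => ((((hu i).mul (hu j)).pd j).pd i).integrable_mul
      locallyIntegrable_inv_norm, ← integral_finsetSum _ fun j _ => hdiv j, ← integral_const_mul,
      ← integral_sub ((integrable_finsetSum _ fun j _ => hdiv j).const_mul 2)
        ((isTest_nullLagrangian hu).integrable_mul locallyIntegrable_inv_norm)]
    simp only [← Finset.sum_mul, sum_pd_pd_mul hu, sub_mul, mul_assoc]
  rw [← hhess]
  simp only [integral_lap_mul_Phi ((hu _).mul (hu _)), Fin.sum_univ_three]
  simp only [Fin.isValue, Fin.reduceEq, zero_ne_one, one_ne_zero, if_true, if_false]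
  ring

lemma lameEnergy_zero (hu : ∀ i, IsTest fun x => u x i) {α : ℝ} (h1 : α + 1 ≠ 0)
    (h2 : α + 2 ≠ 0) :
    lameEnergy α u 0 = 1 / 2 * (∑ i, u 0 i ^ 2)
      + (∑ i, ∑ j, ∫ x,
          (jac u x * (jac u x)ᵀ + α • (jac u x).trace • (jac u x)ᵀ) i j * Phi α x i j)
      - cA α * (α / (α + 2)) *
        ∫ x, ((jac u x).trace ^ 2 - (jac u x * jac u x).trace) * ‖x‖⁻¹ := by
  have hlap (i j : Fin 3) := ((hu i).mul (hu j)).lap.integrable_mul (locallyIntegrable_Phi α i j)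
  have hdiv (i j : Fin 3) := (((isTest_divg hu).mul (hu j)).pd i).integrable_mul
    (locallyIntegrable_Phi α i j)
  have hbulk (i j : Fin 3) := (isTest_jac_mul_transpose_add hu α i j).integrable_mul
    (locallyIntegrable_Phi α i j)
  have hdiv' : ∑ j, ∑ i, ∫ x, pd i (fun x => divg u x * u x j) x * Phi α x i j =
      cA α * (1 - α / (α + 2)) * ∑ j, ∫ x, pd j (fun x => divg u x * u x j) x * ‖x‖⁻¹ := by
    simp only [sum_integral_pd_mul_Phi ((isTest_divg hu).mul (hu _)), Finset.mul_sum]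
  have hmass : cA α * (1 + α / (α + 2)) * (4 * π) = 1 := by
    rw [cA]
    field_simp
    ring
  have hcancel : 2 * (α / (α + 2)) = α * (1 - α / (α + 2)) := by
    field_simp
    ring
  rw [lameEnergy]
  simp only [sub_zero, sum_lame_mul_Phi_mul hu]
  rw [integral_add, integral_sub, integral_const_mul, integral_const_mul, integral_sum_sum hlap,
    integral_sum_sum fun j i => hdiv i j, integral_sum_sum hbulk, hdiv',
    sum_integral_lap_mul_Phi hu]
  · linear_combination 1 / 2 * (∑ i, u 0 i ^ 2) * hmass
      + cA α * (∑ j, ∫ x, pd j (fun x => divg u x * u x j) x * ‖x‖⁻¹) * hcancel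
  · exact (integrable_finsetSum _ fun i _ => integrable_finsetSum _ fun j _ => hlap i j).const_mul _
  · exact (integrable_finsetSum _ fun j _ => integrable_finsetSum _ fun i _ => hdiv i j).const_mul _
  · exact ((integrable_finsetSum _ fun i _ => integrable_finsetSum _ fun j _ =>
      hlap i j).const_mul _).sub ((integrable_finsetSum _ fun j _ =>
      integrable_finsetSum _ fun i _ => hdiv i j).const_mul _)
  · exact integrable_finsetSum _ fun i _ => integrable_finsetSum _ fun j _ => hbulk i j

lemma sum_mul_Phi (G : Matrix (Fin 3) (Fin 3) ℝ) (α : ℝ) (x : E3) :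
    ∑ i, ∑ j, G i j * Phi α x i j = cA α * ‖x‖⁻¹ *
      (G.trace + α / (α + 2) * ((fun i => ‖x‖⁻¹ * x i) ⬝ᵥ G *ᵥ fun i => ‖x‖⁻¹ * x i)) := by
  simp only [Phi, trace, diag_apply, dotProduct, mulVec, Fin.sum_univ_three]
  simp only [Fin.isValue, Fin.reduceEq, zero_ne_one, one_ne_zero, if_true, if_false]
  ring

lemma sum_mul_Phi_sub_eq_lameForm (M : Matrix (Fin 3) (Fin 3) ℝ) {α : ℝ} (h2 : α + 2 ≠ 0)
    (x : E3) :
    (∑ i, ∑ j, (M * Mᵀ + α • M.trace • Mᵀ) i j * Phi α x i j)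
      - cA α * (α / (α + 2)) * ((M.trace ^ 2 - (M * M).trace) * ‖x‖⁻¹) =
      cA α * (lameForm α M (fun i => ‖x‖⁻¹ * x i) * ‖x‖⁻¹) := by
  rw [sum_mul_Phi]
  set w : Fin 3 → ℝ := fun i => ‖x‖⁻¹ * x i
  have htrace : (M * Mᵀ + α • M.trace • Mᵀ).trace = (Mᵀ * M).trace + α * M.trace ^ 2 := by
    rw [trace_add, trace_mul_comm, trace_smul, trace_smul, trace_transpose, smul_eq_mul,
      smul_eq_mul, sq]
  have hquad : w ⬝ᵥ (M * Mᵀ + α • M.trace • Mᵀ) *ᵥ w =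
      (w ᵥ* M) ⬝ᵥ (w ᵥ* M) + α * M.trace * (w ⬝ᵥ M *ᵥ w) := by
    rw [add_mulVec, dotProduct_add, ← mulVec_mulVec, dotProduct_mulVec, mulVec_transpose,
      smul_mulVec, smul_mulVec, dotProduct_smul, dotProduct_smul, mulVec_transpose,
      dotProduct_comm w (w ᵥ* M), dotProduct_mulVec w M w, smul_eq_mul, smul_eq_mul, mul_assoc]
  rw [htrace, hquad, lameForm]
  field_simp
  ring

lemma integrable_lameForm (hu : ∀ i, IsTest fun x => u x i) {α : ℝ} (h1 : α + 1 ≠ 0)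
    (h2 : α + 2 ≠ 0) :
    Integrable fun x => lameForm α (jac u x) (fun i => ‖x‖⁻¹ * x i) * ‖x‖⁻¹ := by
  have hcA : cA α ≠ 0 := div_ne_zero h2 (by positivity)
  refine (integrable_const_mul_iff (IsUnit.mk0 _ hcA) _).mp ?_
  simp only [← sum_mul_Phi_sub_eq_lameForm _ h2]
  exact (integrable_finsetSum _ fun i _ => integrable_finsetSum _ fun j _ =>
    (isTest_jac_mul_transpose_add hu α i j).integrable_mul (locallyIntegrable_Phi α i j)).sub
    (((isTest_nullLagrangian hu).integrable_mul locallyIntegrable_inv_norm).const_mul _)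

lemma lameEnergy_zero_eq_add_integral_lameForm (hu : ∀ i, IsTest fun x => u x i) {α : ℝ}
    (h1 : α + 1 ≠ 0) (h2 : α + 2 ≠ 0) :
    lameEnergy α u 0 = 1 / 2 * (∑ i, u 0 i ^ 2)
      + cA α * ∫ x, lameForm α (jac u x) (fun i => ‖x‖⁻¹ * x i) * ‖x‖⁻¹ := by
  have hbulk (i j : Fin 3) := (isTest_jac_mul_transpose_add hu α i j).integrable_mul
    (locallyIntegrable_Phi α i j)
  rw [lameEnergy_zero hu h1 h2, add_sub_assoc, ← integral_const_mul, ← integral_const_mul,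
    ← integral_sum_sum hbulk, ← integral_sub
      (integrable_finsetSum _ fun i _ => integrable_finsetSum _ fun j _ => hbulk i j)
      (((isTest_nullLagrangian hu).integrable_mul locallyIntegrable_inv_norm).const_mul _)]
  simp only [sum_mul_Phi_sub_eq_lameForm _ h2]

end Energy

/-! ### The range of the parameter -/

section ParameterRange

lemma lame_criterion_of_mem_Icc {α : ℝ} (hα : α ∈ Set.Icc (-(1 / 4)) 2) :
    α * (3 * α + 2) < 2 * √2 * (α + 1) ^ 2 := by
  have hsqrt : 7 / 5 ≤ √2 := Real.le_sqrt_of_sq_le (by norm_num)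
  calc α * (3 * α + 2) < 2 * (7 / 5) * (α + 1) ^ 2 := by
        nlinarith [mul_nonneg (sub_nonneg.mpr hα.1) (sub_nonneg.mpr hα.2)]
    _ ≤ 2 * √2 * (α + 1) ^ 2 := by gcongr

lemma le_two_of_lame_quintic_neg {α : ℝ}
    (h : 6 * α ^ 5 + (23 + 3 * √2) * α ^ 4 + (13 + 19 * √2) * α ^ 3 - (77 - 38 * √2) * α ^ 2
      - (157 - 24 * √2) * α - 96 < 0) : α ≤ 2 := by
  by_contra! hα
  have hsqrt : 1.41 ≤ √2 := Real.le_sqrt_of_sq_le (by norm_num)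
  have h4 : 27 * α ^ 4 ≤ (23 + 3 * √2) * α ^ 4 := by gcongr; linarith
  have h3 : 39 * α ^ 3 ≤ (13 + 19 * √2) * α ^ 3 := by gcongr; linarith
  have h2 : (77 - 38 * √2) * α ^ 2 ≤ 24 * α ^ 2 := by gcongr; linarith
  have h1 : (157 - 24 * √2) * α ≤ 124 * α := by gcongr; linarith
  have hpow5 : 0 ≤ α ^ 5 := by positivity
  have hpow4 : 2 * α ^ 3 ≤ α ^ 4 := by nlinarith [pow_pos (zero_lt_two.trans hα) 3]
  have hpow3 : 2 * α ^ 2 ≤ α ^ 3 := by nlinarith [sq_nonneg α]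
  have hpow2 : 2 * α ≤ α ^ 2 := by nlinarith
  linarith

lemma neg_quarter_le_of_lame_quartic_pos {α : ℝ} (hα₁ : -1 < α) (hα₀ : α < 0)
    (h : 0 < -(2 + 7 * √3) * α ^ 4 + 2 * (15 + √2 - 11 * √3 + √6) * α ^ 3
      + 2 * (57 + 3 * √2 - 10 * √3 + 3 * √6) * α ^ 2 + 6 * (20 + √2 + √6) * α + 24) :
    -(1 / 4) ≤ α := by
  obtain ⟨β, rfl⟩ : ∃ β, α = -β := ⟨-α, (neg_neg α).symm⟩
  have hβ₀ : 0 < β := by linarith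
  have hβ₁ : β < 1 := by linarith
  have hsqrt2 : 1.41 ≤ √2 := Real.le_sqrt_of_sq_le (by norm_num)
  have hsqrt2' : √2 ≤ 1.42 := Real.sqrt_le_iff.mpr (by norm_num)
  have hsqrt3 : 1.73 ≤ √3 := Real.le_sqrt_of_sq_le (by norm_num)
  have hsqrt3' : √3 ≤ 1.74 := Real.sqrt_le_iff.mpr (by norm_num)
  have hsqrt6 : 2.44 ≤ √6 := Real.le_sqrt_of_sq_le (by norm_num)
  have hsqrt6' : √6 ≤ 2.45 := Real.sqrt_le_iff.mpr (by norm_num)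
  have h4 : 0 ≤ (2 + 7 * √3) * β ^ 4 := by positivity
  have h3 : -(2 * (15 + √2 - 11 * √3 + √6)) * β ^ 3 ≤ 1 * β ^ 3 := by gcongr; linarith
  have h2 : 2 * (57 + 3 * √2 - 10 * √3 + 3 * √6) * β ^ 2 ≤ 103 * β ^ 2 := by gcongr; linarith
  have h1 : 143 * β ≤ 6 * (20 + √2 + √6) * β := by gcongr; linarith
  have hpow3 : β ^ 3 ≤ β ^ 2 := pow_le_pow_of_le_one hβ₀.le hβ₁.le (by norm_num)
  have hquadratic : 0 < 24 - 143 * β + 104 * β ^ 2 := by linarith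
  nlinarith [hquadratic]

end ParameterRange

/-! ### Weighted positive definiteness -/

section WeightedPositivity

variable {u : E3 → Fin 3 → ℝ}

lemma IsTestOn.isTest_apply {U : Set E3} (hu : IsTestOn U u) (i : Fin 3) :
    IsTest fun x => u x i :=
  ⟨contDiff_pi.mp hu.1 i, hu.2.1.comp_left (g := fun v : Fin 3 → ℝ => v i) rfl⟩

lemma IsTest.comp_add_right {f : E3 → ℝ} (hf : IsTest f) (y : E3) :
    IsTest fun x => f (x + y) :=
  ⟨hf.1.comp (contDiff_id.add contDiff_const), hf.2.comp_homeomorph (Homeomorph.addRight y)⟩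

lemma lame_comp_add_right (α : ℝ) (u : E3 → Fin 3 → ℝ) (y : E3) :
    lame α (fun x => u (x + y)) = fun x => lame α u (x + y) := by
  have hdivg : divg (fun x => u (x + y)) = fun x => divg u (x + y) := by
    funext x
    exact Finset.sum_congr rfl fun k _ => congrFun (pd_comp_add_right (fun z => u z k) y k) x
  funext x i
  rw [lame, lame, hdivg, pd_comp_add_right, lap_comp_add_right fun x => u x i]

lemma lameEnergy_comp_add_right (α : ℝ) (u : E3 → Fin 3 → ℝ) (y : E3) :
    lameEnergy α (fun x => u (x + y)) 0 = lameEnergy α u y := by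
  refine Eq.trans ?_ (integral_add_right_eq_self
    (fun x => ∑ i, ∑ j, lame α u x i * Phi α (x - y) i j * u x j) y)
  simp only [lameEnergy, lame_comp_add_right, add_sub_cancel_right, sub_zero]

lemma jac_comp_add_right (u : E3 → Fin 3 → ℝ) (y : E3) :
    jac (fun x => u (x + y)) = fun x => jac u (x + y) := by
  ext x i k
  exact congrFun (pd_comp_add_right (fun z => u z i) y k) x

lemma integral_jac_comp_add_right (u : E3 → Fin 3 → ℝ) (y : E3) :
    ∫ x, (∑ i, ∑ k, jac (fun x => u (x + y)) x i k ^ 2) * ‖x‖⁻¹ =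
      ∫ x, (∑ i, ∑ k, jac u x i k ^ 2) * ‖x - y‖⁻¹ := by
  rw [← integral_add_right_eq_self (fun x => _ * ‖x - y‖⁻¹) y]
  simp only [jac_comp_add_right, add_sub_cancel_right]

lemma exists_pos_le_lameEnergy_zero {α : ℝ} (h : α * (3 * α + 2) < 2 * √2 * (α + 1) ^ 2) :
    ∃ c > 0, ∀ u : E3 → Fin 3 → ℝ, (∀ i, IsTest fun x => u x i) →
      1 / 2 * (∑ i, u 0 i ^ 2) + c * ∫ x, (∑ i, ∑ k, jac u x i k ^ 2) * ‖x‖⁻¹ ≤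
        lameEnergy α u 0 := by
  have hα := neg_three_quarters_lt_of_lame_criterion h
  have h1 : 0 < α + 1 := by linarith
  have h2 : 0 < α + 2 := by linarith
  have hcA : 0 < cA α := div_pos h2 (by positivity)
  obtain ⟨κ, hκ, hcoercive⟩ := exists_pos_mul_le_lameForm h
  refine ⟨cA α * κ, by positivity, fun u hu => ?_⟩
  rw [lameEnergy_zero_eq_add_integral_lameForm hu h1.ne' h2.ne', mul_assoc (cA α),
    ← integral_const_mul]
  have hgrad : Integrable fun x => (∑ i, ∑ k, jac u x i k ^ 2) * ‖x‖⁻¹ := by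
    have htest : IsTest fun x => ∑ i, ∑ k, jac u x i k * jac u x i k :=
      IsTest.sum fun i _ => IsTest.sum fun k _ => (isTest_jac hu i k).mul (isTest_jac hu i k)
    simpa only [sq] using htest.integrable_mul locallyIntegrable_inv_norm
  gcongr 1 / 2 * _ + cA α * ?_
  refine integral_mono_ae (hgrad.const_mul κ) (integrable_lameForm hu h1.ne' h2.ne') ?_
  filter_upwards [Measure.ae_ne volume 0] with x hx
  have hunit : (fun i => ‖x‖⁻¹ * x i) ⬝ᵥ (fun i => ‖x‖⁻¹ * x i) = 1 := by
    have hx' : ‖x‖ ≠ 0 := norm_ne_zero_iff.mpr hx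
    simp only [dotProduct, ← sq, mul_pow, ← Finset.mul_sum]
    rw [← EuclideanSpace.real_norm_sq_eq, ← mul_pow, inv_mul_cancel₀ hx', one_pow]
  rw [← mul_assoc, ← trace_transpose_mul_self]
  gcongr
  exact hcoercive _ _ hunit

theorem lame_quantitative_weighted_positive_definite_general {α : ℝ}
    (h : α * (3 * α + 2) < 2 * √2 * (α + 1) ^ 2) :
    ∃ c > (0 : ℝ), ∀ u : E3 → Fin 3 → ℝ, IsTestOn Set.univ u → ∀ y : E3,
      (1 / 2) * (∑ i, (u y i) ^ 2) +
          c * ∫ x : E3, (∑ i, ∑ k, (pd k (fun z => u z i) x) ^ 2) * ‖x - y‖⁻¹ ≤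
        lameEnergy α u y := by
  obtain ⟨c, hc, hle⟩ := exists_pos_le_lameEnergy_zero h
  refine ⟨c, hc, fun u hu y => ?_⟩
  have hle_y := hle (fun x => u (x + y)) fun i => (hu.isTest_apply i).comp_add_right y
  rw [lameEnergy_comp_add_right, integral_jac_comp_add_right, zero_add] at hle_y
  exact hle_y

end WeightedPositivity

/-- Under the conditions of weighted positive definiteness there is `c > 0`
such that for all test fields `u` and all `y`,
`∫ (Lu)·(Φ(·-y)u) ≥ (1/2)|u(y)|² + c ∫ |Du(x)|²/|x-y| dx`. -/
theorem lame_quantitative_weighted_positive_definite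
    (α : ℝ)
    (h : (0 ≤ α ∧ (α ^ 4 - 4 * (1 - Real.sqrt 2) * α ^ 3 - 12 * (3 - Real.sqrt 2) * α ^ 2 - 12 * (6 - Real.sqrt 2) * α - 48 < 0) ∧ (6 * α ^ 5 + (23 + 3 * Real.sqrt 2) * α ^ 4 + (13 + 19 * Real.sqrt 2) * α ^ 3 - (77 - 38 * Real.sqrt 2) * α ^ 2 - (157 - 24 * Real.sqrt 2) * α - 96 < 0)) ∨
         (-1 < α ∧ α < 0 ∧ (0 < -(2 + 7 * Real.sqrt 3) * α ^ 4 + 2 * (15 + Real.sqrt 2 - 11 * Real.sqrt 3 + Real.sqrt 6) * α ^ 3 + 2 * (57 + 3 * Real.sqrt 2 - 10 * Real.sqrt 3 + 3 * Real.sqrt 6) * α ^ 2 + 6 * (20 + Real.sqrt 2 + Real.sqrt 6) * α + 24))) :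
    ∃ c > (0 : ℝ), ∀ u : E3 → Fin 3 → ℝ, IsTestOn Set.univ u → ∀ y : E3,
      (1 / 2) * (∑ i, (u y i) ^ 2) +
          c * ∫ x : E3, (∑ i, ∑ k, (pd k (fun z => u z i) x) ^ 2) * ‖x - y‖⁻¹ ≤
        lameEnergy α u y := by
  refine lame_quantitative_weighted_positive_definite_general (lame_criterion_of_mem_Icc ?_)
  rcases h with ⟨hα, -, hquintic⟩ | ⟨hα₁, hα₀, hquartic⟩
  · exact ⟨by linarith, le_two_of_lame_quintic_neg hquintic⟩
  · exact ⟨neg_quarter_le_of_lame_quartic_pos hα₁ hα₀ hquartic, by linarith⟩
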